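/- For a real parameter ν > 1/2, an integer k ≥ 0, and real numbers γ, γ′, define W_{ν,γ}^{(k)}(t) as the k-th derivative in t of 2ν/((t−γ)² + ν²). Then ∫_ℝ W_{ν,γ}^{(k)}(t) · W_{ν,γ′}^{(k)}(t) dt = (4π (2k)!)/(2ν)^{2k+1} · w_{ν,k}(γ − γ′), where w_{ν,k}(u) := (2ν)^{2k+1}/(u² + 4ν²)^{2k+1} · Re((2ν − iu)^{2k+1}). -/

import Mathlib

open Real

/-- The weight `w_{ν,k}(u)`. -/
noncomputable def wweight (ν : ℝ) (k : ℕ) (u : ℝ) : ℝ :=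
  (2 * ν) ^ (2 * k + 1) / (u ^ 2 + 4 * ν ^ 2) ^ (2 * k + 1) *
    ((((2 * ν : ℝ) : ℂ) - (u : ℂ) * Complex.I) ^ (2 * k + 1)).re

open MeasureTheory Filter Topology

lemma ofReal_sub_ne_zero_of_im_ne_zero {c : ℂ} (hc : c.im ≠ 0) (t : ℝ) : (t : ℂ) - c ≠ 0 := by
  intro h
  apply hc
  simpa using congrArg Complex.im h

lemma continuous_inv_ofReal_sub_pow {c : ℂ} (hc : c.im ≠ 0) (n : ℕ) :
    Continuous fun t : ℝ => (((t : ℂ) - c) ^ n)⁻¹ :=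
  Continuous.inv₀ (by fun_prop) fun t => pow_ne_zero _ (ofReal_sub_ne_zero_of_im_ne_zero hc t)

lemma norm_inv_ofReal_sub_pow_le {c : ℂ} (hc : c.im ≠ 0) (n : ℕ) (t : ℝ) :
    ‖(((t : ℂ) - c) ^ n)⁻¹‖ ≤ (|c.im| ^ n)⁻¹ := by
  rw [norm_inv, norm_pow]
  have h : |c.im| ≤ ‖(t : ℂ) - c‖ := by simpa using Complex.abs_im_le_norm ((t : ℂ) - c)
  have := abs_pos.2 hc
  gcongr

lemma integrable_norm_inv_ofReal_sub_sq {c : ℂ} (hc : c.im ≠ 0) :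
    Integrable fun t : ℝ => ‖((t : ℂ) - c)⁻¹‖ ^ 2 := by
  have h := ((integrable_inv_one_add_sq.comp_div hc).comp_sub_right c.re).const_mul (c.im ^ 2)⁻¹
  refine h.congr (Eventually.of_forall fun t => ?_)
  simp only [norm_inv, inv_pow, Complex.sq_norm, Complex.normSq_apply]
  rw [← mul_inv]
  congr 1
  simp
  field_simp
  ring

lemma integrable_inv_ofReal_sub_mul {c d : ℂ} (hc : c.im ≠ 0) (hd : d.im ≠ 0) :
    Integrable fun t : ℝ => ((t : ℂ) - c)⁻¹ * ((t : ℂ) - d)⁻¹ := by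
  refine ((integrable_norm_inv_ofReal_sub_sq hc).add (integrable_norm_inv_ofReal_sub_sq hd)).mono'
    ?_ (Eventually.of_forall fun t => ?_)
  · have h (c : ℂ) (hc : c.im ≠ 0) : Continuous fun t : ℝ => ((t : ℂ) - c)⁻¹ := by
      simpa using continuous_inv_ofReal_sub_pow hc 1
    exact ((h c hc).mul (h d hd)).aestronglyMeasurable
  · simp only [norm_mul, Pi.add_apply]
    nlinarith [sq_nonneg (‖((t : ℂ) - c)⁻¹‖ - ‖((t : ℂ) - d)⁻¹‖),
      sq_nonneg (‖((t : ℂ) - c)⁻¹‖ + ‖((t : ℂ) - d)⁻¹‖)]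

lemma integrable_inv_ofReal_sub_pow_mul {c d : ℂ} (hc : c.im ≠ 0) (hd : d.im ≠ 0) (m n : ℕ) :
    Integrable fun t : ℝ => (((t : ℂ) - c) ^ (m + 1))⁻¹ * (((t : ℂ) - d) ^ (n + 1))⁻¹ := by
  have h := ((integrable_inv_ofReal_sub_mul hc hd).bdd_mul
    (continuous_inv_ofReal_sub_pow hc m).aestronglyMeasurable
    (Eventually.of_forall (norm_inv_ofReal_sub_pow_le hc m))).bdd_mul
    (continuous_inv_ofReal_sub_pow hd n).aestronglyMeasurable
    (Eventually.of_forall (norm_inv_ofReal_sub_pow_le hd n))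
  refine h.congr (Eventually.of_forall fun t => ?_)
  simp only [pow_succ, mul_inv]
  ring

lemma hasDerivAt_inv_ofReal_sub_pow {c : ℂ} (hc : c.im ≠ 0) (n : ℕ) (t : ℝ) :
    HasDerivAt (fun t : ℝ => (((t : ℂ) - c) ^ (n + 1))⁻¹)
      (-(n + 1) * (((t : ℂ) - c) ^ (n + 2))⁻¹) t := by
  have hne := ofReal_sub_ne_zero_of_im_ne_zero hc t
  have h1 : HasDerivAt (fun t : ℝ => (t : ℂ) - c) 1 t := Complex.ofRealCLM.hasDerivAt.sub_const c
  refine ((h1.pow (n + 1)).inv (pow_ne_zero _ hne)).congr_deriv ?_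
  simp only [Pi.pow_apply, Nat.add_sub_cancel, mul_one]
  push_cast
  field_simp
  ring

lemma tendsto_inv_ofReal_sub_pow {c : ℂ} (n : ℕ) {l : Filter ℝ}
    (hl : Tendsto (fun t : ℝ => |t|) l atTop) :
    Tendsto (fun t : ℝ => (((t : ℂ) - c) ^ (n + 1))⁻¹) l (𝓝 0) := by
  have h1 : Tendsto (fun t : ℝ => ((t : ℂ) - c)) l (Bornology.cobounded ℂ) := by
    rw [← tendsto_norm_atTop_iff_cobounded]
    refine tendsto_atTop_mono (f := fun t : ℝ => |t| - ‖c‖) (fun t => ?_)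
      (tendsto_atTop_add_const_right _ _ hl)
    simpa using norm_sub_norm_le (t : ℂ) c
  simpa using ((tendsto_inv₀_cobounded.comp h1).pow (n + 1))

lemma integral_inv_ofReal_sub_pow {c : ℂ} (hc : c.im ≠ 0) (n : ℕ) :
    ∫ t : ℝ, (((t : ℂ) - c) ^ (n + 2))⁻¹ = 0 := by
  have hi : Integrable fun t : ℝ => (((t : ℂ) - c) ^ (n + 2))⁻¹ := by
    refine (integrable_inv_ofReal_sub_pow_mul hc hc n 0).congr (Eventually.of_forall fun t => ?_)
    simp only [← mul_inv, ← pow_add]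
  have h := integral_of_hasDerivAt_of_tendsto (hasDerivAt_inv_ofReal_sub_pow hc n)
    (hi.const_mul _) (tendsto_inv_ofReal_sub_pow n tendsto_abs_atBot_atTop)
    (tendsto_inv_ofReal_sub_pow n tendsto_abs_atTop_atTop)
  rw [integral_const_mul, sub_zero, mul_eq_zero] at h
  exact h.resolve_left (neg_ne_zero.2 (by exact_mod_cast n.succ_ne_zero))

/-- Partial fractions reduce the integral of `(t - c)⁻ᵐ (t - d)⁻ⁿ` to the case `m = n = 1`. -/
lemma integral_inv_ofReal_sub_pow_mul {c d θ : ℂ} (hc : c.im ≠ 0) (hd : d.im ≠ 0) (hcd : c ≠ d)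
    (hθ : ∫ t : ℝ, ((t : ℂ) - c)⁻¹ * ((t : ℂ) - d)⁻¹ = θ / (d - c)) (m n : ℕ) :
    ∫ t : ℝ, (((t : ℂ) - c) ^ (m + 1))⁻¹ * (((t : ℂ) - d) ^ (n + 1))⁻¹ =
      (-1) ^ n * (m + n).choose m * θ / (d - c) ^ (m + n + 1) := by
  have hne : d - c ≠ 0 := sub_ne_zero.2 hcd.symm
  have split (m n : ℕ) (t : ℝ) :
      (d - c) * ((((t : ℂ) - c) ^ (m + 1))⁻¹ * (((t : ℂ) - d) ^ (n + 1))⁻¹) =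
      (((t : ℂ) - c) ^ m)⁻¹ * (((t : ℂ) - d) ^ (n + 1))⁻¹ -
      (((t : ℂ) - c) ^ (m + 1))⁻¹ * (((t : ℂ) - d) ^ n)⁻¹ := by
    have h1 := ofReal_sub_ne_zero_of_im_ne_zero hc t
    have h2 := ofReal_sub_ne_zero_of_im_ne_zero hd t
    field_simp
    ring
  have key (m n : ℕ)
      (h1 : Integrable fun t : ℝ => (((t : ℂ) - c) ^ m)⁻¹ * (((t : ℂ) - d) ^ (n + 1))⁻¹)
      (h2 : Integrable fun t : ℝ => (((t : ℂ) - c) ^ (m + 1))⁻¹ * (((t : ℂ) - d) ^ n)⁻¹) :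
      ∫ t : ℝ, (((t : ℂ) - c) ^ (m + 1))⁻¹ * (((t : ℂ) - d) ^ (n + 1))⁻¹ =
      ((∫ t : ℝ, (((t : ℂ) - c) ^ m)⁻¹ * (((t : ℂ) - d) ^ (n + 1))⁻¹) -
      ∫ t : ℝ, (((t : ℂ) - c) ^ (m + 1))⁻¹ * (((t : ℂ) - d) ^ n)⁻¹) / (d - c) := by
    rw [eq_div_iff hne, mul_comm, ← integral_const_mul, ← integral_sub h1 h2]
    simp only [split]
  have single {c : ℂ} (hc : c.im ≠ 0) (n : ℕ) :
      Integrable fun t : ℝ => (((t : ℂ) - c) ^ (n + 2))⁻¹ := by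
    refine (integrable_inv_ofReal_sub_pow_mul hc hc n 0).congr (Eventually.of_forall fun t => ?_)
    simp only [← mul_inv, ← pow_add]
  induction m generalizing n with
  | zero =>
    induction n with
    | zero => simpa using hθ
    | succ n ih =>
      rw [key 0 (n + 1) (by simpa using single hd n) (integrable_inv_ofReal_sub_pow_mul hc hd 0 n),
        ih]
      simp only [pow_zero, inv_one, one_mul, integral_inv_ofReal_sub_pow hd]
      simp
      field_simp
      ring
  | succ m ihm =>
    induction n with
    | zero =>
      rw [key (m + 1) 0 (integrable_inv_ofReal_sub_pow_mul hc hd m 0) (by simpa using single hc m),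
        ihm]
      simp only [pow_zero, inv_one, mul_one, integral_inv_ofReal_sub_pow hc]
      simp
      field_simp
      ring
    | succ n ihn =>
      rw [key (m + 1) (n + 1) (integrable_inv_ofReal_sub_pow_mul hc hd m (n + 1))
        (integrable_inv_ofReal_sub_pow_mul hc hd (m + 1) n), ihm, ihn,
        show m + 1 + (n + 1) = (m + n + 1) + 1 by ring, Nat.choose_succ_succ,
        show m + (n + 1) = m + n + 1 by ring, show m + 1 + n = m + n + 1 by ring]
      push_cast
      field_simp
      ring

lemma tendsto_log_mul_ofReal_sub_sub_log {p : ℂ} (hp : p ∈ Complex.slitPlane) (c : ℂ) :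
    Tendsto (fun t : ℝ => Complex.log (p * ((t : ℂ) - c)) - Complex.log t) atTop
      (𝓝 (Complex.log p)) := by
  have h1 : Tendsto (fun t : ℝ => p * (1 - c * ((t⁻¹ : ℝ) : ℂ))) atTop (𝓝 p) := by
    have h0 : Tendsto (fun t : ℝ => ((t⁻¹ : ℝ) : ℂ)) atTop (𝓝 ((0 : ℝ) : ℂ)) :=
      (Complex.continuous_ofReal.tendsto 0).comp tendsto_inv_atTop_zero
    simpa using ((h0.const_mul c).const_sub 1).const_mul p
  have hev : ∀ᶠ t : ℝ in atTop, p * (1 - c * ((t⁻¹ : ℝ) : ℂ)) ∈ Complex.slitPlane :=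
    h1.eventually (Complex.isOpen_slitPlane.mem_nhds hp)
  refine ((continuousAt_clog hp).tendsto.comp h1).congr' ?_
  filter_upwards [eventually_gt_atTop 0, hev] with t ht hs
  have ht' : (t : ℂ) ≠ 0 := by exact_mod_cast ht.ne'
  have : p * ((t : ℂ) - c) = (t : ℂ) * (p * (1 - c * ((t⁻¹ : ℝ) : ℂ))) := by
    push_cast
    field_simp
  rw [this, Complex.log_ofReal_mul ht (Complex.slitPlane_ne_zero hs), Complex.ofReal_log ht.le]
  simp

lemma integral_inv_ofReal_sub_mul {c d p q : ℂ} (hcd : c ≠ d)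
    (hp : ∀ t : ℝ, 0 < (p * ((t : ℂ) - c)).re) (hq : ∀ t : ℝ, 0 < (q * ((t : ℂ) - d)).re)
    (hc : c.im ≠ 0) (hd : d.im ≠ 0)
    (hp1 : p ∈ Complex.slitPlane) (hp2 : -p ∈ Complex.slitPlane)
    (hq1 : q ∈ Complex.slitPlane) (hq2 : -q ∈ Complex.slitPlane) :
    ∫ t : ℝ, ((t : ℂ) - c)⁻¹ * ((t : ℂ) - d)⁻¹ =
      (Complex.log q - Complex.log p - (Complex.log (-q) - Complex.log (-p))) / (d - c) := by
  have hne : d - c ≠ 0 := sub_ne_zero.2 hcd.symm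
  have hlog {p c : ℂ} (hp : ∀ t : ℝ, 0 < (p * ((t : ℂ) - c)).re) (hc : c.im ≠ 0)
      (hp0 : p ∈ Complex.slitPlane) (t : ℝ) :
      HasDerivAt (fun t : ℝ => Complex.log (p * ((t : ℂ) - c))) ((t : ℂ) - c)⁻¹ t := by
    have h1 : HasDerivAt (fun t : ℝ => p * ((t : ℂ) - c)) (p * 1) t :=
      (Complex.ofRealCLM.hasDerivAt.sub_const c).const_mul p
    refine (h1.clog_real (Or.inl (hp t))).congr_deriv ?_
    rw [mul_one, div_mul_cancel_left₀ (Complex.slitPlane_ne_zero hp0)]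
  have hder (t : ℝ) : HasDerivAt
      (fun t : ℝ => Complex.log (q * ((t : ℂ) - d)) - Complex.log (p * ((t : ℂ) - c)))
      ((d - c) * (((t : ℂ) - c)⁻¹ * ((t : ℂ) - d)⁻¹)) t := by
    refine ((hlog hq hd hq1 t).sub (hlog hp hc hp1 t)).congr_deriv ?_
    have := ofReal_sub_ne_zero_of_im_ne_zero hd t
    have := ofReal_sub_ne_zero_of_im_ne_zero hc t
    field_simp
    ring
  have htop : Tendsto
      (fun t : ℝ => Complex.log (q * ((t : ℂ) - d)) - Complex.log (p * ((t : ℂ) - c)))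
      atTop (𝓝 (Complex.log q - Complex.log p)) := by
    refine ((tendsto_log_mul_ofReal_sub_sub_log hq1 d).sub
      (tendsto_log_mul_ofReal_sub_sub_log hp1 c)).congr fun t => ?_
    ring
  have hbot : Tendsto
      (fun t : ℝ => Complex.log (q * ((t : ℂ) - d)) - Complex.log (p * ((t : ℂ) - c)))
      atBot (𝓝 (Complex.log (-q) - Complex.log (-p))) := by
    refine (((tendsto_log_mul_ofReal_sub_sub_log hq2 (-d)).sub
      (tendsto_log_mul_ofReal_sub_sub_log hp2 (-c))).comp tendsto_neg_atBot_atTop).congr fun t => ?_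
    simp only [Function.comp_apply, Complex.ofReal_neg]
    rw [show -q * (-(t : ℂ) - -d) = q * (t - d) by ring,
      show -p * (-(t : ℂ) - -c) = p * (t - c) by ring]
    ring
  rw [eq_div_iff hne, mul_comm, ← integral_const_mul]
  exact integral_of_hasDerivAt_of_tendsto hder
    ((integrable_inv_ofReal_sub_mul hc hd).const_mul _) hbot htop

lemma integral_inv_ofReal_sub_pow_mul_of_im_pos {c d : ℂ} (hc : 0 < c.im) (hd : 0 < d.im)
    (k : ℕ) :
    ∫ t : ℝ, (((t : ℂ) - c) ^ (k + 1))⁻¹ * (((t : ℂ) - d) ^ (k + 1))⁻¹ = 0 := by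
  by_cases hcd : c = d
  · subst hcd
    rw [← integral_inv_ofReal_sub_pow hc.ne' (2 * k)]
    congr 1 with t
    rw [← mul_inv, ← pow_add]
    ring_nf
  · rw [integral_inv_ofReal_sub_pow_mul (θ := 0) hc.ne' hd.ne' hcd _ k k]
    · simp
    · rw [integral_inv_ofReal_sub_mul (p := Complex.I) (q := Complex.I) hcd] <;>
        simp [Complex.mem_slitPlane_iff, hc, hd, hc.ne', hd.ne']

lemma integral_inv_ofReal_sub_pow_mul_of_im_pos_of_im_neg {c d : ℂ} (hc : 0 < c.im)
    (hd : d.im < 0) (k : ℕ) :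
    ∫ t : ℝ, (((t : ℂ) - c) ^ (k + 1))⁻¹ * (((t : ℂ) - d) ^ (k + 1))⁻¹ =
      (-1) ^ k * (2 * k).choose k * (-2 * Real.pi * Complex.I) / (d - c) ^ (2 * k + 1) := by
  have hcd : c ≠ d := by rintro rfl; exact lt_asymm hc hd
  rw [two_mul k]
  apply integral_inv_ofReal_sub_pow_mul hc.ne' hd.ne hcd
  rw [integral_inv_ofReal_sub_mul (p := Complex.I) (q := -Complex.I) hcd]
  · simp only [neg_neg, Complex.log_I, Complex.log_neg_I]
    ring
  all_goals simp [Complex.mem_slitPlane_iff, hc, hd, hc.ne', hd.ne]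

lemma iteratedDeriv_poisson_kernel {ν : ℝ} (hν : 0 < ν) (γ : ℝ) (k : ℕ) (t : ℝ) :
    iteratedDeriv k (fun s : ℝ => 2 * ν / ((s - γ) ^ 2 + ν ^ 2)) t =
      (-2 * Complex.I * (-1) ^ k * k.factorial *
        (((t : ℂ) - (γ + ν * Complex.I)) ^ (k + 1))⁻¹).re := by
  have hc : ((γ : ℂ) + ν * Complex.I).im ≠ 0 := by simpa using hν.ne'
  induction k generalizing t with
  | zero =>
    simp [Complex.inv_re, Complex.inv_im, Complex.normSq_apply]
    ring
  | succ k ih =>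
    rw [iteratedDeriv_succ, funext ih]
    have h := Complex.reCLM.hasFDerivAt.comp_hasDerivAt t
      ((hasDerivAt_inv_ofReal_sub_pow hc k t).const_mul
        (-2 * Complex.I * (-1) ^ k * k.factorial))
    refine h.deriv.trans ?_
    rw [Complex.reCLM_apply]
    congr 1
    rw [Nat.factorial_succ]
    push_cast
    ring

theorem integral_W_deriv_product (ν : ℝ) (hν : 1/2 < ν) (k : ℕ) (γ γ' : ℝ) :
    ∫ t : ℝ, iteratedDeriv k (fun s : ℝ => 2 * ν / ((s - γ) ^ 2 + ν ^ 2)) t *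
        iteratedDeriv k (fun s : ℝ => 2 * ν / ((s - γ') ^ 2 + ν ^ 2)) t =
      4 * Real.pi * ((2 * k).factorial : ℝ) / (2 * ν) ^ (2 * k + 1) * wweight ν k (γ - γ') := by
  have hpos : 0 < ν := by linarith
  simp only [iteratedDeriv_poisson_kernel hpos]
  set c : ℂ := γ + ν * Complex.I with hc
  set d : ℂ := γ' + ν * Complex.I with hd
  have hcim : c.im = ν := by simp [hc]
  have hdim : d.im = ν := by simp [hd]
  set d' : ℂ := (starRingEnd ℂ) d with hd'
  have hdim' : d'.im = -ν := by simp [hd', hdim]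
  have hne : c.im ≠ 0 := by rw [hcim]; exact hpos.ne'
  have hne2 : d.im ≠ 0 := by rw [hdim]; exact hpos.ne'
  have hne3 : d'.im ≠ 0 := by rw [hdim']; exact neg_ne_zero.2 hpos.ne'
  have hprod (t : ℝ) :
      (-2 * Complex.I * (-1) ^ k * k.factorial * (((t : ℂ) - c) ^ (k + 1))⁻¹).re *
        (-2 * Complex.I * (-1) ^ k * k.factorial * (((t : ℂ) - d) ^ (k + 1))⁻¹).re =
      (2 * (k.factorial : ℂ) ^ 2 * ((((t : ℂ) - c) ^ (k + 1))⁻¹ * (((t : ℂ) - d') ^ (k + 1))⁻¹ -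
        (((t : ℂ) - c) ^ (k + 1))⁻¹ * (((t : ℂ) - d) ^ (k + 1))⁻¹)).re := by
    have hconj : (((t : ℂ) - d') ^ (k + 1))⁻¹ =
        (starRingEnd ℂ) (((t : ℂ) - d) ^ (k + 1))⁻¹ := by simp [hd']
    have hs : (-1 : ℂ) ^ k = (((-1 : ℝ) ^ k : ℝ) : ℂ) := by push_cast; rfl
    have hs2 : ((-1 : ℝ) ^ k) ^ 2 = 1 := by rw [← pow_mul, mul_comm, pow_mul]; simp
    have hf : (k.factorial : ℂ) = ((k.factorial : ℝ) : ℂ) := by push_cast; rfl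
    rw [hconj, hs, hf, ← Complex.ofReal_pow (k.factorial : ℝ)]
    generalize (((t : ℂ) - c) ^ (k + 1))⁻¹ = z
    generalize (((t : ℂ) - d) ^ (k + 1))⁻¹ = w
    generalize (-1 : ℝ) ^ k = s at *
    simp only [Complex.mul_re, Complex.mul_im, Complex.sub_re, Complex.sub_im, Complex.conj_re,
      Complex.conj_im, Complex.ofReal_re, Complex.ofReal_im, Complex.I_re, Complex.I_im,
      Complex.neg_re, Complex.neg_im, Complex.re_ofNat, Complex.im_ofNat]
    linear_combination (4 * (k.factorial : ℝ) ^ 2 * z.im * w.im) * hs2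
  simp only [hprod]
  have hi1 := integrable_inv_ofReal_sub_pow_mul hne hne3 k k
  have hi2 := integrable_inv_ofReal_sub_pow_mul hne hne2 k k
  refine (Complex.reCLM.integral_comp_comm ((hi1.sub hi2).const_mul _)).trans ?_
  simp only [Pi.sub_apply]
  rw [integral_const_mul, integral_sub hi1 hi2,
    integral_inv_ofReal_sub_pow_mul_of_im_pos (d := d) (hcim ▸ hpos) (hdim ▸ hpos),
    integral_inv_ofReal_sub_pow_mul_of_im_pos_of_im_neg (d := d') (hcim ▸ hpos) (by rw [hdim']; linarith),
    sub_zero, Complex.reCLM_apply]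
  have hch : ((2 * k).factorial : ℂ) = (2 * k).choose k * (k.factorial : ℂ) ^ 2 := by
    have := Nat.add_choose_mul_factorial_mul_factorial k k
    rw [← two_mul] at this
    rw [← this]
    push_cast
    ring
  have hdc : d' - c = -Complex.I * (2 * ν + (γ' - γ) * Complex.I) := by
    simp only [hd', hc, hd, map_add, map_mul, Complex.conj_ofReal, Complex.conj_I]
    linear_combination ((γ' : ℂ) - γ) * Complex.I_mul_I
  have hA : 0 < (γ - γ') ^ 2 + 4 * ν ^ 2 := by positivity
  set z : ℂ := ((2 * ν : ℝ) : ℂ) - ((γ - γ' : ℝ) : ℂ) * Complex.I with hz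
  have hdz : d' - c = -Complex.I * z := by rw [hdc, hz]; push_cast; ring
  have hnz : Complex.normSq z = (γ - γ') ^ 2 + 4 * ν ^ 2 := by
    simp [hz, Complex.normSq_apply]; ring
  have hz0 : z ≠ 0 := by rw [← Complex.normSq_pos, hnz]; exact hA
  have hI : (-Complex.I) ^ (2 * k + 1) = (-1) ^ k * -Complex.I := by
    rw [pow_succ, pow_mul]; simp
  have hsimp : 2 * (k.factorial : ℂ) ^ 2 * ((-1) ^ k * (2 * k).choose k * (-2 * Real.pi * Complex.I) /
      (d' - c) ^ (2 * k + 1)) =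
      ((4 * π * (2 * k).factorial : ℝ) : ℂ) * (z ^ (2 * k + 1))⁻¹ := by
    rw [hdz, mul_pow, hI]
    push_cast
    rw [hch]
    have : (-1 : ℂ) ^ k ≠ 0 := by simp
    field_simp
    ring
  rw [hsimp, Complex.re_ofReal_mul, Complex.inv_re, map_pow, hnz, wweight, ← hz]
  field_simp
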